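/- arXiv:1911.06398 — 4 statements merged into one kernel-verified Lean document; each statement's English description precedes it below -/
import Mathlib

section
/- Let G be a simple graph on an odd number n of vertices whose Laplacian matrix L(G) has simple spectrum. Then the number of unordered pairs {u,v} of twin vertices of G is at most (n − 1)/2. -/
open Classical Matrix

noncomputable def lap {n : ℕ} (G : SimpleGraph (Fin n)) : Matrix (Fin n) (Fin n) ℝ :=
  Matrix.of fun i j =>
    (if i = j then ((G.neighborSet i).ncard : ℝ) else 0) - (if G.Adj i j then 1 else 0)

def IsTwin {n : ℕ} (G : SimpleGraph (Fin n)) (u v : Fin n) : Prop :=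
  u ≠ v ∧ G.neighborSet u \ {v} = G.neighborSet v \ {u}

def IsEigenvalue {n : ℕ} (M : Matrix (Fin n) (Fin n) ℝ) (μ : ℝ) : Prop :=
  ∃ x : Fin n → ℝ, x ≠ 0 ∧ M.mulVec x = μ • x

def HasSimpleSpectrum {n : ℕ} (M : Matrix (Fin n) (Fin n) ℝ) : Prop :=
  ∃ μ : Fin n → ℝ, Function.Injective μ ∧ ∀ i, IsEigenvalue M (μ i)

def Controllable {n : ℕ} (M : Matrix (Fin n) (Fin n) ℝ) (b : Fin n → ℝ) : Prop :=
  Submodule.span ℝ (Set.range fun k : Fin n => (M ^ (k : ℕ)).mulVec b) = ⊤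

def StronglyUncontrollable {n : ℕ} (G : SimpleGraph (Fin n)) : Prop :=
  G.Connected ∧ HasSimpleSpectrum (lap G) ∧
    ∀ b : Fin n → ℝ, (∀ i, b i = 0 ∨ b i = 1) → ¬ Controllable (lap G) b

def Pmat {n k : ℕ} (c : Fin n → Fin k) : Matrix (Fin n) (Fin k) ℝ :=
  Matrix.of fun i j => if c i = j then 1 else 0

def IsAEP {n k : ℕ} (G : SimpleGraph (Fin n)) (c : Fin n → Fin k) : Prop :=
  ∀ i j : Fin k, i ≠ j → ∀ x y : Fin n, c x = i → c y = i →
    (G.neighborSet x ∩ {z | c z = j}).ncard = (G.neighborSet y ∩ {z | c z = j}).ncard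

noncomputable def quotLap {n k : ℕ} (G : SimpleGraph (Fin n)) (c : Fin n → Fin k) :
    Matrix (Fin k) (Fin k) ℝ :=
  ((Pmat c)ᵀ * Pmat c)⁻¹ * (Pmat c)ᵀ * lap G * Pmat c

def IsQuotAEP {k m : ℕ} (Lq : Matrix (Fin k) (Fin k) ℝ) (r : Fin k → Fin m) : Prop :=
  ∀ a b : Fin m, a ≠ b → ∀ C C' : Fin k, r C = a → r C' = a →
    ∑ C'' ∈ Finset.univ.filter (fun C'' => r C'' = b), Lq C C'' =
      ∑ C'' ∈ Finset.univ.filter (fun C'' => r C'' = b), Lq C' C''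

def IsGraphAut {n : ℕ} (G : SimpleGraph (Fin n)) (σ : Equiv.Perm (Fin n)) : Prop :=
  ∀ x y, G.Adj x y ↔ G.Adj (σ x) (σ y)

def joinOne {n : ℕ} (G : SimpleGraph (Fin n)) : SimpleGraph (Fin (n + 1)) where
  Adj x y := x ≠ y ∧ ((x : ℕ) = n ∨ (y : ℕ) = n ∨
    ∃ (hx : (x : ℕ) < n) (hy : (y : ℕ) < n), G.Adj ⟨x, hx⟩ ⟨y, hy⟩)
  symm := by
    constructor
    rintro x y ⟨hxy, h⟩
    refine ⟨hxy.symm, ?_⟩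
    rcases h with h | h | ⟨hx, hy, h⟩
    exacts [Or.inr (Or.inl h), Or.inl h, Or.inr (Or.inr ⟨hy, hx, h.symm⟩)]
  loopless := ⟨fun x h => h.1 rfl⟩

def joinTwo {n : ℕ} (G : SimpleGraph (Fin n)) : SimpleGraph (Fin (n + 2)) where
  Adj x y := x ≠ y ∧ (((x : ℕ) < n ∧ n ≤ (y : ℕ)) ∨ ((y : ℕ) < n ∧ n ≤ (x : ℕ)) ∨
    ∃ (hx : (x : ℕ) < n) (hy : (y : ℕ) < n), G.Adj ⟨x, hx⟩ ⟨y, hy⟩)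
  symm := by
    constructor
    rintro x y ⟨hxy, h⟩
    refine ⟨hxy.symm, ?_⟩
    rcases h with h | h | ⟨hx, hy, h⟩
    exacts [Or.inr (Or.inl h), Or.inl h, Or.inr (Or.inr ⟨hy, hx, h.symm⟩)]
  loopless := ⟨fun x h => h.1 rfl⟩

def addPendant {n : ℕ} (G : SimpleGraph (Fin n)) (v : Fin n) : SimpleGraph (Fin (n + 1)) where
  Adj x y := ((x : ℕ) = n ∧ (y : ℕ) = (v : ℕ)) ∨ ((y : ℕ) = n ∧ (x : ℕ) = (v : ℕ)) ∨
    ∃ (hx : (x : ℕ) < n) (hy : (y : ℕ) < n), G.Adj ⟨x, hx⟩ ⟨y, hy⟩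
  symm := by
    constructor
    rintro x y (h | h | ⟨hx, hy, h⟩)
    exacts [Or.inr (Or.inl h), Or.inl h, Or.inr (Or.inr ⟨hy, hx, h.symm⟩)]
  loopless := by
    constructor
    intro x h
    have hv := v.isLt
    rcases h with ⟨h1, h2⟩ | ⟨h1, h2⟩ | ⟨hx, hy, h⟩
    · omega
    · omega
    · exact G.loopless.irrefl _ h


lemma twin_symm {n : ℕ} {G : SimpleGraph (Fin n)} {u v : Fin n} (h : IsTwin G u v) :
    IsTwin G v u := ⟨h.1.symm, h.2.symm⟩

lemma twin_deg {n : ℕ} {G : SimpleGraph (Fin n)} {u v : Fin n} (h : IsTwin G u v) :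
    (G.neighborSet u).ncard = (G.neighborSet v).ncard := by
  obtain ⟨hne, h⟩ := h
  by_cases ha : G.Adj u v
  · have h1 := Set.ncard_diff_singleton_add_one (s := G.neighborSet u) (a := v) ha
      (Set.toFinite _)
    have h2 := Set.ncard_diff_singleton_add_one (s := G.neighborSet v) (a := u) ha.symm
      (Set.toFinite _)
    rw [h] at h1
    omega
  · rw [Set.diff_singleton_eq_self (by simpa using ha),
      Set.diff_singleton_eq_self (by simpa using fun h => ha h.symm)] at h
    rw [h]

lemma twin_adj {n : ℕ} {G : SimpleGraph (Fin n)} {u v i : Fin n} (h : IsTwin G u v)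
    (hu : i ≠ u) (hv : i ≠ v) : G.Adj i u ↔ G.Adj i v := by
  have := Set.ext_iff.1 h.2 i
  simpa [hu, hv, G.adj_comm] using this

lemma twin_eig {n : ℕ} {G : SimpleGraph (Fin n)} {u v : Fin n} (h : IsTwin G u v) :
    ∃ l : ℝ, (lap G).mulVec (Pi.single u 1 - Pi.single v 1) =
      l • (Pi.single u 1 - Pi.single v 1 : Fin n → ℝ) := by
  refine ⟨(G.neighborSet u).ncard + (if G.Adj u v then 1 else 0), ?_⟩
  have hd := twin_deg h
  have hne := h.1
  funext i
  rw [Matrix.mulVec_sub]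
  simp only [Matrix.mulVec_single_one, Pi.sub_apply, Pi.smul_apply, Matrix.col_apply, lap,
    Matrix.of_apply, smul_eq_mul]
  by_cases hu : i = u
  · subst hu
    simp [hne]
  · by_cases hv : i = v
    · subst hv
      simp [hne.symm, hd, G.adj_comm i u]
      ring
    · simp [hu, hv, twin_adj h hu hv]

lemma eig_dep {n : ℕ} {M : Matrix (Fin n) (Fin n) ℝ} (hM : HasSimpleSpectrum M)
    {l : ℝ} {y z : Fin n → ℝ} (hy : M.mulVec y = l • y) (hz : M.mulVec z = l • z)
    (hy0 : y ≠ 0) : ∃ c d : ℝ, c ≠ 0 ∧ d • y = c • z := by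
  obtain ⟨μ, hinj, hx⟩ := hM
  choose x hx0 hx using hx
  have hli : LinearIndependent ℝ x :=
    Module.End.eigenvectors_linearIndependent' (Matrix.toLin' M) μ hinj x
      (fun i => ⟨by simp [Module.End.mem_eigenspace_iff, hx], hx0 i⟩)
  let b : Module.Basis (Fin n) ℝ (Fin n → ℝ) :=
    basisOfLinearIndependentOfCardEqFinrank' x hli (by simp)
  have hb : ∀ i, b i = x i := fun i => by simp [b]
  have key : ∀ w : Fin n → ℝ, M.mulVec w = l • w → ∀ j, μ j ≠ l → b.repr w j = 0 := by
    intro w hw j hj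
    have h1 : b.repr (M.mulVec w) j = μ j * b.repr w j := by
      have : (b.coord j) ∘ₗ (Matrix.toLin' M) = μ j • b.coord j := by
        apply b.ext
        intro i
        simp only [LinearMap.comp_apply, Matrix.toLin'_apply, LinearMap.smul_apply, hb, hx]
        rw [map_smul, ← hb]
        by_cases hij : i = j
        · subst hij; simp
        · simp [hij]
      have := LinearMap.congr_fun this w
      simpa using this
    rw [hw] at h1
    simp only [map_smul, Finsupp.smul_apply, smul_eq_mul] at h1
    have : (μ j - l) * b.repr w j = 0 := by linarith
    rcases mul_eq_zero.1 this with h | h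
    · exact absurd (sub_eq_zero.1 h) hj
    · exact h
  have : ∃ i, b.repr y i ≠ 0 := by
    by_contra! hc
    exact hy0 (b.repr.map_eq_zero_iff.1 (Finsupp.ext hc))
  obtain ⟨i, hi⟩ := this
  refine ⟨b.repr y i, b.repr z i, hi, ?_⟩
  apply b.repr.injective
  ext j
  simp only [map_smul, Finsupp.smul_apply, smul_eq_mul]
  by_cases hj : j = i
  · subst hj; ring
  · have hil : μ i = l := by
      by_contra h
      exact hi (key y hy i h)
    have hjl : μ j ≠ l := fun h => hj (hinj (h.trans hil.symm))
    rw [key y hy j hjl, key z hz j hjl]; simp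

lemma lap_symm {n : ℕ} (G : SimpleGraph (Fin n)) : (lap G).transpose = lap G := by
  ext i j
  simp only [Matrix.transpose_apply, lap, Matrix.of_apply, G.adj_comm j i]
  by_cases h : i = j
  · subst h; rfl
  · simp [h, Ne.symm h]

lemma twin_unique {n : ℕ} {G : SimpleGraph (Fin n)} (hs : HasSimpleSpectrum (lap G))
    {u v w : Fin n} (h1 : IsTwin G u v) (h2 : IsTwin G u w) : v = w := by
  by_contra hvw
  obtain ⟨l, hl⟩ := twin_eig h1
  obtain ⟨m, hm⟩ := twin_eig h2
  have huv := h1.1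
  have huw := h2.1
  set y : Fin n → ℝ := Pi.single u 1 - Pi.single v 1 with hy
  set z : Fin n → ℝ := Pi.single u 1 - Pi.single w 1 with hz
  have hyz : y ⬝ᵥ z = 1 := by
    simp [hy, hz, sub_dotProduct, huv, huw, hvw]
  have hlm : l = m := by
    have e1 : (lap G).mulVec y ⬝ᵥ z = y ⬝ᵥ (lap G).mulVec z := by
      rw [Matrix.dotProduct_mulVec, ← Matrix.mulVec_transpose, lap_symm]
    rw [hl, hm, smul_dotProduct, dotProduct_smul, hyz] at e1
    simpa using e1
  subst hlm
  have hy0 : y ≠ 0 := by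
    intro h
    rw [h] at hyz
    simp at hyz
  obtain ⟨c, d, hc, h⟩ := eig_dep hs hl hm hy0
  have := congrFun h w
  simp [hy, hz, huw.symm, Ne.symm hvw] at this
  exact hc this

theorem stmt2 {n : ℕ} (hn : Odd n) (G : SimpleGraph (Fin n))
    (hspec : HasSimpleSpectrum (lap G)) :
    {p : Fin n × Fin n | p.1 < p.2 ∧ IsTwin G p.1 p.2}.ncard ≤ (n - 1) / 2 := by
  set S := {p : Fin n × Fin n | p.1 < p.2 ∧ IsTwin G p.1 p.2} with hS
  let f : S × Bool → Fin n := fun q => if q.2 then q.1.1.1 else q.1.1.2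
  have hf : Function.Injective f := by
    rintro ⟨⟨⟨a, b⟩, hab, ht⟩, s⟩ ⟨⟨⟨c, d⟩, hcd, ht'⟩, t⟩ h
    simp only at hab ht hcd ht'
    cases s <;> cases t <;> simp [f] at h <;> subst h
    · have := twin_unique hspec (twin_symm ht) (twin_symm ht')
      subst this; rfl
    · have := twin_unique hspec (twin_symm ht) ht'
      subst this; exact absurd hab hcd.not_gt
    · have := twin_unique hspec ht (twin_symm ht')
      subst this; exact absurd hab hcd.not_gt
    · have := twin_unique hspec ht ht'
      subst this; rfl
  have h := Nat.card_le_card_of_injective f hf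
  rw [Nat.card_prod, Nat.card_coe_set_eq] at h
  simp at h
  obtain ⟨k, hk⟩ := hn
  omega
end

section
/- Let G be a strongly uncontrollable graph on vertex set {1,…,n} whose Laplacian eigenvalues are all strictly less than n, and let G̃ be the graph on {1,…,n+1} obtained from G by adding the new vertex n+1 adjacent to every vertex of G. Then a permutation σ of {1,…,n+1} is an automorphism of G̃ if and only if σ(n+1) = n+1 and the restriction of σ to {1,…,n} is an automorphism of G; consequently Aut(G) and Aut(G̃) are equal when viewed as subgroups of the symmetric group S_{n+1}. -/
open Classical Matrix

theorem lap_row_sum {n : ℕ} (G : SimpleGraph (Fin n)) (i : Fin n) : ∑ j, lap G i j = 0 := by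
  simp only [lap, Matrix.of_apply, Finset.sum_sub_distrib]
  rw [Finset.sum_ite_eq, Finset.sum_boole, if_pos (Finset.mem_univ i), sub_eq_zero]
  congr 1
  rw [← Set.ncard_coe_finset]
  congr 1
  ext j
  simp

theorem no_dominating {n : ℕ} (G : SimpleGraph (Fin n)) (hG : StronglyUncontrollable G)
    (hrad : ∀ μ : ℝ, IsEigenvalue (lap G) μ → μ < n) (v : Fin n)
    (hv : ∀ w, w ≠ v → G.Adj v w) : False := by
  have hn : n ≠ 1 := by
    rintro rfl
    refine hG.2.2 (fun _ => 1) (fun _ => Or.inr rfl) ?_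
    unfold Controllable
    rw [eq_top_iff]
    rintro x -
    have hx : x = x 0 • (((lap G) ^ ((0 : Fin 1) : ℕ)).mulVec (fun _ => (1 : ℝ))) := by
      ext i
      have : i = 0 := Subsingleton.elim _ _
      subst this
      simp
    rw [hx]
    exact Submodule.smul_mem _ _ (Submodule.subset_span ⟨0, rfl⟩)
  have hn2 : 2 ≤ n := by have := v.isLt; omega
  have hn3 : (2 : ℝ) ≤ n := by exact_mod_cast hn2
  refine lt_irrefl (n : ℝ) (hrad n ⟨fun j => (if j = v then (n : ℝ) else 0) - 1, ?_, ?_⟩)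
  · intro h
    have := congrFun h v
    simp at this
    linarith
  · ext i
    have h1 : ∑ j, lap G i j * ((if j = v then (n : ℝ) else 0) - 1) = lap G i v * n := by
      simp only [mul_sub, mul_one, Finset.sum_sub_distrib, lap_row_sum, sub_zero, mul_ite,
        mul_zero, Finset.sum_ite_eq', Finset.mem_univ, if_true]
    simp only [Matrix.mulVec, dotProduct, Pi.smul_apply, smul_eq_mul]
    rw [h1]
    by_cases hi : i = v
    · subst hi
      have h2 : G.neighborSet i = ((Finset.univ.erase i : Finset (Fin n)) : Set (Fin n)) := by
        ext w
        simp only [SimpleGraph.mem_neighborSet, Finset.coe_erase, Finset.coe_univ, Set.mem_diff,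
          Set.mem_univ, true_and, Set.mem_singleton_iff]
        exact ⟨fun h => h.ne', hv w⟩
      have h3 : ((G.neighborSet i).ncard : ℝ) = n - 1 := by
        rw [h2, Set.ncard_coe_finset, Finset.card_erase_of_mem (Finset.mem_univ i)]
        rw [Finset.card_univ, Fintype.card_fin, Nat.cast_sub (by omega)]
        simp
      simp [lap, h3]
      ring
    · simp [lap, hi, (hv i hi).symm]

theorem joinOne_castSucc {n : ℕ} (G : SimpleGraph (Fin n)) (x y : Fin n) :
    (joinOne G).Adj x.castSucc y.castSucc ↔ G.Adj x y := by
  have hx := x.isLt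
  have hy := y.isLt
  constructor
  · rintro ⟨h, h1 | h1 | ⟨_, _, h1⟩⟩
    · simp at h1; omega
    · simp at h1; omega
    · exact h1
  · intro h
    exact ⟨fun e => h.ne (Fin.castSucc_injective _ e), Or.inr (Or.inr ⟨hx, hy, h⟩)⟩

theorem joinOne_last {n : ℕ} (G : SimpleGraph (Fin n)) (y : Fin (n + 1)) (h : y ≠ Fin.last n) :
    (joinOne G).Adj (Fin.last n) y := ⟨h.symm, Or.inl rfl⟩

theorem stmt7 {n : ℕ} (G : SimpleGraph (Fin n)) (hG : StronglyUncontrollable G)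
    (hrad : ∀ μ : ℝ, IsEigenvalue (lap G) μ → μ < n)
    (σ : Equiv.Perm (Fin (n + 1))) :
    IsGraphAut (joinOne G) σ ↔
      (σ (Fin.last n) = Fin.last n ∧
        ∃ τ : Equiv.Perm (Fin n), IsGraphAut G τ ∧
          ∀ x : Fin n, σ x.castSucc = (τ x).castSucc) := by
  constructor
  · intro h
    have hl : σ (Fin.last n) = Fin.last n := by
      by_contra hne
      obtain ⟨v, hv⟩ := Fin.exists_castSucc_eq.2 hne
      refine no_dominating G hG hrad v fun w hw => ?_
      rw [← joinOne_castSucc, hv]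
      have h1 : σ.symm w.castSucc ≠ Fin.last n := by
        intro e
        rw [Equiv.symm_apply_eq, ← hv] at e
        exact hw (Fin.castSucc_injective _ e)
      have := (h _ _).1 (joinOne_last G _ h1)
      rwa [Equiv.apply_symm_apply] at this
    refine ⟨hl, ?_⟩
    have hex : ∀ x : Fin n, ∃ y : Fin n, y.castSucc = σ x.castSucc := by
      intro x
      refine Fin.exists_castSucc_eq.2 fun e => ?_
      rw [← hl] at e
      exact (Fin.castSucc_lt_last x).ne (σ.injective e)
    choose f hf using hex
    have hinj : Function.Injective f := by
      intro x y e
      apply Fin.castSucc_injective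
      apply σ.injective
      rw [← hf, ← hf, e]
    refine ⟨Equiv.ofBijective f (Finite.injective_iff_bijective.1 hinj), fun x y => ?_,
      fun x => (hf x).symm⟩
    rw [← joinOne_castSucc, h, ← hf, ← hf, joinOne_castSucc]
    rfl
  · rintro ⟨hl, τ, hτ, hs⟩ x y
    have key : ∀ y : Fin n, σ y.castSucc ≠ Fin.last n := fun y => by
      rw [hs]; exact (Fin.castSucc_lt_last _).ne
    induction x using Fin.lastCases with
    | last =>
      induction y using Fin.lastCases with
      | last => simp
      | cast y =>
        rw [hl]
        exact iff_of_true (joinOne_last G _ (Fin.castSucc_lt_last _).ne) (joinOne_last G _ (key y))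
    | cast x =>
      induction y using Fin.lastCases with
      | last =>
        rw [hl]
        exact iff_of_true (joinOne_last G _ (Fin.castSucc_lt_last _).ne).symm
          (joinOne_last G _ (key x)).symm
      | cast y =>
        rw [hs, hs, joinOne_castSucc, joinOne_castSucc]
        exact hτ x y
end

section
/- Let G be a strongly uncontrollable graph on vertex set {1,…,n} such that neither n − 2 nor n is an eigenvalue of L(G), and let G̃ be the graph on {1,…,n+2} obtained from G by adding the two new vertices n+1 and n+2, non-adjacent to each other, each adjacent to every vertex of G. Then a permutation σ of {1,…,n+2} is an automorphism of G̃ if and only if σ({n+1, n+2}) = {n+1, n+2} and the restriction of σ to {1,…,n} is an automorphism of G; equivalently, Aut(G̃) is generated by the extensions of the automorphisms of G (fixing n+1 and n+2) together with the transposition (n+1 n+2). -/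
open Classical Matrix

lemma eig_of_pair {n : ℕ} (G : SimpleGraph (Fin n)) (u w : Fin n) (huw : u ≠ w)
    (hn : ¬ G.Adj u w) (hu : ∀ z, z ≠ u → z ≠ w → G.Adj u z)
    (hw : ∀ z, z ≠ u → z ≠ w → G.Adj w z) : IsEigenvalue (lap G) ((n : ℝ) - 2) := by
  have hc : ((({u, w} : Set (Fin n))ᶜ.ncard : ℕ) : ℝ) = (n : ℝ) - 2 := by
    have h := Set.ncard_add_ncard_compl ({u, w} : Set (Fin n))
    rw [Set.ncard_pair huw, Nat.card_eq_fintype_card, Fintype.card_fin] at h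
    have h' : ((2 + ({u, w} : Set (Fin n))ᶜ.ncard : ℕ) : ℝ) = n := by rw [h]
    push_cast at h'
    linarith
  have hn' : ¬ G.Adj w u := fun h => hn h.symm
  have e1 : G.neighborSet u = ({u, w} : Set (Fin n))ᶜ := by
    ext z
    simp only [SimpleGraph.mem_neighborSet, Set.mem_compl_iff, Set.mem_insert_iff,
      Set.mem_singleton_iff, not_or]
    constructor
    · intro h
      exact ⟨fun e => G.loopless.irrefl u (e ▸ h), fun e => hn (e ▸ h)⟩
    · intro h; exact hu z h.1 h.2
  have e2 : G.neighborSet w = ({u, w} : Set (Fin n))ᶜ := by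
    ext z
    simp only [SimpleGraph.mem_neighborSet, Set.mem_compl_iff, Set.mem_insert_iff,
      Set.mem_singleton_iff, not_or]
    constructor
    · intro h
      exact ⟨fun e => hn' (e ▸ h), fun e => G.loopless.irrefl w (e ▸ h)⟩
    · intro h; exact hw z h.1 h.2
  refine ⟨Pi.single u 1 - Pi.single w 1, ?_, ?_⟩
  · intro h
    have := congrFun h u
    simp [huw] at this
  · rw [Matrix.mulVec_sub, Matrix.mulVec_single_one, Matrix.mulVec_single_one]
    ext z
    by_cases hzu : z = u
    · subst hzu
      simp [lap, huw, hn, e1, hc]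
    · by_cases hzw : z = w
      · subst hzw
        simp [lap, hzu, hn', e2, hc]
      · have a1 := (hu z hzu hzw).symm
        have a2 := (hw z hzu hzw).symm
        simp [lap, hzu, hzw, a1, a2]

lemma aut_ge {n : ℕ} (G : SimpleGraph (Fin n)) (h2 : ¬ IsEigenvalue (lap G) ((n : ℝ) - 2))
    (σ : Equiv.Perm (Fin (n + 2))) (h : IsGraphAut (joinTwo G) σ)
    (x y : Fin (n + 2)) (hxy : x ≠ y) (hx : n ≤ (x : ℕ)) (hy : n ≤ (y : ℕ)) :
    n ≤ ((σ x : Fin (n + 2)) : ℕ) := by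
  by_contra hlt
  push Not at hlt
  have hne : σ x ≠ σ y := fun e => hxy (σ.injective e)
  have hnadj : ¬ (joinTwo G).Adj (σ x) (σ y) := by
    rw [← h]
    rintro ⟨-, h | h | ⟨h, -, -⟩⟩ <;> omega
  have hylt : ((σ y : Fin (n + 2)) : ℕ) < n := by
    by_contra hge
    exact hnadj ⟨hne, Or.inl ⟨hlt, by omega⟩⟩
  have key : ∀ v : Fin (n + 2), n ≤ (v : ℕ) → ∀ z : Fin (n + 2), z ≠ σ x → z ≠ σ y →
      (joinTwo G).Adj (σ v) z := by
    intro v hv z hzx hzy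
    obtain ⟨t, rfl⟩ := σ.surjective z
    rw [← h]
    have h1 : t ≠ x := fun e => hzx (by rw [e])
    have h3 : t ≠ y := fun e => hzy (by rw [e])
    have ht : (t : ℕ) < n := by
      have := Fin.val_ne_of_ne h1
      have := Fin.val_ne_of_ne h3
      have := Fin.val_ne_of_ne hxy
      omega
    exact ⟨fun e => by rw [e] at hv; omega, Or.inr (Or.inl ⟨ht, hv⟩)⟩
  have key2 : ∀ v : Fin (n + 2), n ≤ (v : ℕ) → ∀ hv : ((σ v : Fin (n + 2)) : ℕ) < n,
      ∀ z : Fin n, z ≠ ⟨σ x, hlt⟩ → z ≠ ⟨σ y, hylt⟩ → G.Adj ⟨σ v, hv⟩ z := by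
    intro v hv hv' z hz1 hz2
    have := key v hv ⟨z, by omega⟩ (fun e => hz1 (Fin.ext (by have q := congrArg Fin.val e; exact q)))
      (fun e => hz2 (Fin.ext (by have q := congrArg Fin.val e; exact q)))
    obtain ⟨-, h | h | ⟨_, _, h⟩⟩ := this
    · have := z.isLt
      simp at h; omega
    · omega
    · exact h
  refine h2 (eig_of_pair G ⟨σ x, hlt⟩ ⟨σ y, hylt⟩ ?_ ?_ (key2 x hx hlt) (key2 y hy hylt))
  · intro e
    exact hne (Fin.ext (by have q := congrArg Fin.val e; exact q))
  · intro e
    exact hnadj ⟨hne, Or.inr (Or.inr ⟨hlt, hylt, e⟩)⟩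

lemma joinTwo_lt {n : ℕ} (G : SimpleGraph (Fin n)) (x y : Fin n) :
    (joinTwo G).Adj (Fin.castLE (Nat.le_add_right n 2) x) (Fin.castLE (Nat.le_add_right n 2) y) ↔ G.Adj x y := by
  constructor
  · rintro ⟨-, h | h | ⟨_, _, h⟩⟩
    · have := y.isLt
      simp at h; omega
    · have := x.isLt
      simp at h; omega
    · exact h
  · intro h
    exact ⟨fun e => h.ne (Fin.ext (by have q := congrArg Fin.val e; exact q)), Or.inr (Or.inr ⟨x.isLt, y.isLt, h⟩)⟩

lemma joinTwo_ge {n : ℕ} (G : SimpleGraph (Fin n)) (x y : Fin (n + 2)) (hx : n ≤ (x : ℕ)) :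
    (joinTwo G).Adj x y ↔ (y : ℕ) < n := by
  constructor
  · rintro ⟨-, h | h | ⟨_, _, h⟩⟩ <;> omega
  · intro h
    exact ⟨fun e => by rw [e] at hx; omega, Or.inr (Or.inl ⟨h, hx⟩)⟩

theorem stmt9 {n : ℕ} (G : SimpleGraph (Fin n)) (hG : StronglyUncontrollable G)
    (h2 : ¬ IsEigenvalue (lap G) ((n : ℝ) - 2)) (h0 : ¬ IsEigenvalue (lap G) (n : ℝ))
    (σ : Equiv.Perm (Fin (n + 2))) :
    IsGraphAut (joinTwo G) σ ↔
      (({σ ⟨n, by omega⟩, σ ⟨n + 1, by omega⟩} : Set (Fin (n + 2))) =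
          {⟨n, by omega⟩, ⟨n + 1, by omega⟩} ∧
        ∃ τ : Equiv.Perm (Fin n), IsGraphAut G τ ∧
          ∀ x : Fin n, σ (Fin.castLE (by omega) x) = Fin.castLE (by omega) (τ x)) := by
  constructor
  · intro h
    have ha := aut_ge G h2 σ h ⟨n, by omega⟩ ⟨n + 1, by omega⟩ (by simp) (by simp) (by simp)
    have hb := aut_ge G h2 σ h ⟨n + 1, by omega⟩ ⟨n, by omega⟩ (by simp) (by simp) (by simp)
    have hab : σ ⟨n, by omega⟩ ≠ σ ⟨n + 1, by omega⟩ := fun e => by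
      have := σ.injective e
      simp at this
    have hab' := Fin.val_ne_of_ne hab
    have hlt : ∀ x : Fin n, ((σ (Fin.castLE (by omega) x) : Fin (n + 2)) : ℕ) < n := by
      intro x
      have hx := x.isLt
      have h1 : σ (Fin.castLE (by omega) x) ≠ σ ⟨n, by omega⟩ := fun e => by
        have := congrArg Fin.val (σ.injective e)
        simp at this; omega
      have h3 : σ (Fin.castLE (by omega) x) ≠ σ ⟨n + 1, by omega⟩ := fun e => by
        have := congrArg Fin.val (σ.injective e)
        simp at this; omega
      have h1' := Fin.val_ne_of_ne h1
      have h3' := Fin.val_ne_of_ne h3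
      omega
    refine ⟨?_, ?_⟩
    · ext z
      simp only [Set.mem_insert_iff, Set.mem_singleton_iff, Fin.ext_iff]
      omega
    · let f : Fin n → Fin n := fun x => ⟨σ (Fin.castLE (by omega) x), hlt x⟩
      have hf : Function.Injective f := by
        intro x y hxy
        have h1 : σ (Fin.castLE (by omega) x) = σ (Fin.castLE (by omega) y) :=
          Fin.ext (by have q := congrArg Fin.val hxy; exact q)
        exact Fin.ext (by have q := congrArg Fin.val (σ.injective h1); exact q)
      have hfσ : ∀ x, σ (Fin.castLE (by omega) x) = Fin.castLE (by omega) (f x) :=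
        fun x => Fin.ext rfl
      refine ⟨Equiv.ofBijective f (Finite.injective_iff_bijective.mp hf), ?_, ?_⟩
      · intro x y
        rw [← joinTwo_lt G x y, h, hfσ, hfσ, joinTwo_lt]
        rfl
      · intro x
        exact hfσ x
  · rintro ⟨hs, τ, hτ, hστ⟩
    have hge : ∀ x : Fin (n + 2), n ≤ (x : ℕ) → n ≤ ((σ x : Fin (n + 2)) : ℕ) := by
      intro x hx
      have hm : σ x ∈ ({⟨n, by omega⟩, ⟨n + 1, by omega⟩} : Set (Fin (n + 2))) := by
        rw [← hs]
        have : x = ⟨n, by omega⟩ ∨ x = ⟨n + 1, by omega⟩ := by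
          simp only [Fin.ext_iff]; omega
        rcases this with e | e
        · left; rw [e]
        · right; rw [e]; rfl
      simp only [Set.mem_insert_iff, Set.mem_singleton_iff, Fin.ext_iff] at hm
      omega
    have hlt : ∀ x : Fin (n + 2), (x : ℕ) < n ↔ ((σ x : Fin (n + 2)) : ℕ) < n := by
      intro x
      constructor
      · intro hx
        have := congrArg Fin.val (hστ ⟨x, hx⟩)
        have h3 := (τ ⟨x, hx⟩).isLt
        simp only [Fin.castLE_mk, Fin.val_castLE, Fin.eta] at this
        omega
      · intro hx
        by_contra hc
        have := hge x (by omega)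
        omega
    intro x y
    by_cases hx : n ≤ (x : ℕ)
    · rw [joinTwo_ge G x y hx, joinTwo_ge G _ _ (hge x hx), hlt y]
    by_cases hy : n ≤ (y : ℕ)
    · rw [SimpleGraph.adj_comm, joinTwo_ge G y x hy, SimpleGraph.adj_comm,
        joinTwo_ge G _ _ (hge y hy), hlt x]
    push Not at hx hy
    obtain ⟨x', rfl⟩ : ∃ x' : Fin n, x = Fin.castLE (Nat.le_add_right n 2) x' := ⟨⟨x, hx⟩, Fin.ext rfl⟩
    obtain ⟨y', rfl⟩ : ∃ y' : Fin n, y = Fin.castLE (Nat.le_add_right n 2) y' := ⟨⟨y, hy⟩, Fin.ext rfl⟩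
    rw [hστ, hστ, joinTwo_lt, joinTwo_lt]
    exact hτ x' y'
end

section
/- Let G be a simple graph on n vertices and let π be an almost equitable partition of G with k < n cells and characteristic matrix P_π. If b ∈ {0,1}^n is constant on each cell of π, i.e., b = P_π b̄ for some b̄ ∈ {0,1}^k, then the pair (L(G), b) is uncontrollable. -/
open Classical Matrix

lemma lap_mulVec_cell {n k : ℕ} (G : SimpleGraph (Fin n)) (c : Fin n → Fin k) (f : Fin n → ℝ)
    (g : Fin k → ℝ) (hf : ∀ x, f x = g (c x)) (x : Fin n) :
    (lap G).mulVec f x =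
      ∑ j, ((G.neighborSet x ∩ {z | c z = j}).ncard : ℝ) * (g (c x) - g j) := by
  have hd : ((G.neighborSet x).ncard : ℝ) = ∑ z, if G.Adj x z then (1 : ℝ) else 0 := by
    rw [Set.ncard_eq_toFinset_card', Finset.sum_boole]
    congr 2
    ext z
    simp
  have hc : ∀ j, ((G.neighborSet x ∩ {z | c z = j}).ncard : ℝ)
      = ∑ z, if c z = j then (if G.Adj x z then (1 : ℝ) else 0) else 0 := by
    intro j
    simp_rw [← ite_and]
    rw [Set.ncard_eq_toFinset_card', Finset.sum_boole]
    congr 2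
    ext z
    simp [and_comm]
  have h1 : (lap G).mulVec f x = ∑ z, (if G.Adj x z then (1 : ℝ) else 0) * (g (c x) - g (c z)) := by
    simp only [Matrix.mulVec, dotProduct, lap, Matrix.of_apply, sub_mul, Finset.sum_sub_distrib,
      mul_sub, hf]
    congr 1
    rw [← Finset.sum_mul, ← hd]
    simp
  rw [h1]
  simp_rw [hc, Finset.sum_mul]
  rw [Finset.sum_comm]
  refine Finset.sum_congr rfl fun z _ => ?_
  simp only [ite_mul, zero_mul]
  simp

theorem stmt16 {n k : ℕ} (hk : k < n) (G : SimpleGraph (Fin n))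
    (c : Fin n → Fin k) (hcsurj : Function.Surjective c) (hπ : IsAEP G c)
    (b : Fin n → ℝ) (bbar : Fin k → ℝ) (hbin : ∀ j, bbar j = 0 ∨ bbar j = 1)
    (hb : b = (Pmat c).mulVec bbar) :
    ¬ Controllable (lap G) b := by
  intro hC
  obtain ⟨x, y, hxy, hcxy⟩ := Fintype.exists_ne_map_eq_of_card_lt c (by simpa using hk)
  have hpow : ∀ m : ℕ, ∃ g : Fin k → ℝ, ∀ x, ((lap G) ^ m).mulVec b x = g (c x) := by
    intro m
    induction m with
    | zero =>
      refine ⟨bbar, fun x => ?_⟩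
      rw [pow_zero, Matrix.one_mulVec, hb]
      simp [Pmat, Matrix.mulVec, dotProduct]
    | succ m ih =>
      obtain ⟨g, hg⟩ := ih
      have key := lap_mulVec_cell G c _ g hg
      refine ⟨fun i => (lap G).mulVec (((lap G) ^ m).mulVec b) (Function.surjInv hcsurj i),
        fun x => ?_⟩
      rw [pow_succ', ← Matrix.mulVec_mulVec, key]
      beta_reduce
      rw [key]
      have hs : c (Function.surjInv hcsurj (c x)) = c x := Function.surjInv_eq hcsurj (c x)
      refine Finset.sum_congr rfl fun j _ => ?_
      rw [hs]
      by_cases hj : c x = j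
      · simp [hj]
      · rw [hπ (c x) j hj x _ rfl hs]
  have hmem : (Pi.single x 1 : Fin n → ℝ) ∈
      Submodule.span ℝ (Set.range fun k : Fin n => ((lap G) ^ (k : ℕ)).mulVec b) := by
    unfold Controllable at hC
    rw [hC]
    trivial
  have hle : Submodule.span ℝ (Set.range fun k : Fin n => ((lap G) ^ (k : ℕ)).mulVec b) ≤
      LinearMap.ker ((LinearMap.proj x : (Fin n → ℝ) →ₗ[ℝ] ℝ) - LinearMap.proj y) := by
    rw [Submodule.span_le]
    rintro _ ⟨m, rfl⟩
    obtain ⟨g, hg⟩ := hpow m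
    simp [hg, hcxy]
  have := hle hmem
  simp [hxy, hxy.symm] at this
end
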